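/- For every field K, the Artinian algebra K[w,x,y,z]/(w^4, x^4, y^4, z^4, wxy(w+z)) has the WLP if and only if the characteristic of K is neither 2 nor 5. -/

import Mathlib

open MvPolynomial

noncomputable def component (r : ℕ) (K : Type*) [Field K]
    (I : Ideal (MvPolynomial (Fin r) K)) (d : ℕ) :
    Submodule K (MvPolynomial (Fin r) K ⧸ I) :=
  (MvPolynomial.homogeneousSubmodule (Fin r) K d).map
    (Ideal.Quotient.mkₐ K I).toLinearMap

noncomputable def hilb (r : ℕ) (K : Type*) [Field K]
    (I : Ideal (MvPolynomial (Fin r) K)) (d : ℕ) : ℕ :=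
  Module.finrank K (component r K I d)

/-- Injectivity of the multiplication map `×L : (R/I)_d → (R/I)_{d+1}`. -/
def mulMapInj (r : ℕ) (K : Type*) [Field K]
    (I : Ideal (MvPolynomial (Fin r) K)) (L : MvPolynomial (Fin r) K) (d : ℕ) : Prop :=
  ∀ a ∈ component r K I d, Ideal.Quotient.mk I L * a = 0 → a = 0

/-- Surjectivity of the multiplication map `×L : (R/I)_d → (R/I)_{d+1}`. -/
def mulMapSurj (r : ℕ) (K : Type*) [Field K]
    (I : Ideal (MvPolynomial (Fin r) K)) (L : MvPolynomial (Fin r) K) (d : ℕ) : Prop :=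
  ∀ b ∈ component r K I (d + 1), ∃ a ∈ component r K I d, Ideal.Quotient.mk I L * a = b

/-- `L` is a Lefschetz element: a linear form for which every multiplication map
`×L : (R/I)_d → (R/I)_{d+1}` has maximal rank (is injective or surjective). -/
def isLefschetzElem (r : ℕ) (K : Type*) [Field K]
    (I : Ideal (MvPolynomial (Fin r) K)) (L : MvPolynomial (Fin r) K) : Prop :=
  L ∈ MvPolynomial.homogeneousSubmodule (Fin r) K 1 ∧
    ∀ d : ℕ, mulMapInj r K I L d ∨ mulMapSurj r K I L d

/-- The Weak Lefschetz Property. -/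
def hasWLP (r : ℕ) (K : Type*) [Field K] (I : Ideal (MvPolynomial (Fin r) K)) : Prop :=
  ∃ L, isLefschetzElem r K I L

/-!
Let `ℓ = z - w - x - y`. Modulo `ℓ` the generators become the quartics `w⁴`, `x⁴`, `y⁴`,
`(w + x + y)⁴`, `wxy(2w + x + y)` in `K[w, x, y]`. Multiplication by `ℓ` is injective in degrees
`≤ 4` as soon as these quartics have no linear syzygy, and surjective in degrees `≥ 5` as soon as
they generate all sextics. The last quartic vanishes on each coordinate line, so a linear syzygy
restricts there to one among `u⁴`, `v⁴`, `(u + v)⁴`; such syzygies are governed by the determinant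
`6 ^ 2 - 4 ^ 2 = 20`, whence the primes `2` and `5`.

Conversely, in characteristic `2` or `5` Frobenius gives `L ^ 4 = 0` or `L ^ 5 = 0` for every linear
form `L`. If `L ^ (n + 1)` is the first vanishing power of a Lefschetz element, then `×L` is not
injective in degree `n ≤ 4`, hence surjective from there on, so that
`A_9 = L ^ (9 - n) A_n = 0`, although `x³y³z³ ≠ 0`.
-/

section GradedPieces

variable {r : ℕ} {K : Type*} [Field K] {I : Ideal (MvPolynomial (Fin r) K)}
  {L : MvPolynomial (Fin r) K} {d e m n : ℕ}

lemma mk_mem_component {p : MvPolynomial (Fin r) K} (hp : p.IsHomogeneous d) :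
    Ideal.Quotient.mk I p ∈ component r K I d :=
  ⟨p, hp, rfl⟩

lemma mul_mem_component {a b : MvPolynomial (Fin r) K ⧸ I} (ha : a ∈ component r K I m)
    (hb : b ∈ component r K I n) : a * b ∈ component r K I (m + n) := by
  obtain ⟨p, hp, rfl⟩ := ha
  obtain ⟨q, hq, rfl⟩ := hb
  exact ⟨p * q, IsHomogeneous.mul hp hq, map_mul (Ideal.Quotient.mk I) p q⟩

lemma mulMapSurj.succ (h : mulMapSurj r K I L d) : mulMapSurj r K I L (d + 1) := by
  rintro _ ⟨p, hp, rfl⟩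
  rw [← homogeneousSubmodule_one_pow, pow_succ', homogeneousSubmodule_one_pow] at hp
  induction hp using Submodule.mul_induction_on' with
  | mem_mul_mem u hu v hv =>
    obtain ⟨a, ha, hav⟩ := h _ (mk_mem_component hv)
    refine ⟨Ideal.Quotient.mk I u * a, ?_, ?_⟩
    · simpa only [add_comm] using mul_mem_component (mk_mem_component hu) ha
    · rw [mul_left_comm, hav, ← map_mul]
      rfl
  | add p _ q _ hp hq =>
    obtain ⟨a, ha, hap⟩ := hp
    obtain ⟨b, hb, hbq⟩ := hq
    exact ⟨a + b, add_mem ha hb, by rw [mul_add, hap, hbq, map_add]⟩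

lemma mulMapSurj.mono (h : mulMapSurj r K I L d) (hde : d ≤ e) : mulMapSurj r K I L e :=
  Nat.le_induction h (fun _ _ ↦ mulMapSurj.succ) e hde

lemma mulMapSurj.exists_pow_mul_eq (h : mulMapSurj r K I L d) (k : ℕ) :
    ∀ b ∈ component r K I (d + k),
      ∃ a ∈ component r K I d, Ideal.Quotient.mk I L ^ k * a = b := by
  induction k with
  | zero => exact fun b hb ↦ ⟨b, hb, by rw [pow_zero, one_mul]⟩
  | succ k ih =>
    intro b hb
    obtain ⟨c, hc, rfl⟩ := h.mono (Nat.le_add_right d k) b hb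
    obtain ⟨a, ha, rfl⟩ := ih c hc
    exact ⟨a, ha, by rw [pow_succ', mul_assoc]⟩

/- By induction we may assume `L ^ n ∉ I`, so that `L ^ n` spoils injectivity in degree `n`;
surjectivity there makes every element of degree `m` a multiple of `L ^ (n + 1)`. -/
theorem isLefschetzElem.component_eq_bot (hL : isLefschetzElem r K I L) (hn : L ^ n ∈ I)
    (hm : 2 * n ≤ m + 1) : component r K I m = ⊥ := by
  induction n with
  | zero =>
    have : Subsingleton (MvPolynomial (Fin r) K ⧸ I) :=
      Ideal.Quotient.subsingleton_iff.2 ((Ideal.eq_top_iff_one I).2 (by rwa [pow_zero] at hn))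
    exact Subsingleton.elim _ _
  | succ n ih =>
    rcases hL.2 n with hinj | hsurj
    · have hLn : (L ^ n).IsHomogeneous n := by simpa only [one_mul] using IsHomogeneous.pow hL.1 n
      refine ih (Ideal.Quotient.eq_zero_iff_mem.1 (hinj _ (mk_mem_component hLn) ?_)) (by omega)
      rwa [← map_mul, ← pow_succ', Ideal.Quotient.eq_zero_iff_mem]
    · obtain ⟨k, rfl⟩ : ∃ k, m = n + k := ⟨m - n, by omega⟩
      refine (Submodule.eq_bot_iff _).2 fun b hb ↦ ?_
      obtain ⟨a, -, rfl⟩ := hsurj.exists_pow_mul_eq k b hb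
      have hk : L ^ k ∈ I := I.pow_mem_of_pow_mem hn (by omega)
      rw [← map_pow, Ideal.Quotient.eq_zero_iff_mem.2 hk, zero_mul]

end GradedPieces

section HomogeneousMultiples

variable {σ R : Type*} [CommRing R] {f g : MvPolynomial σ R} {m n : ℕ}

attribute [local instance] MvPolynomial.gradedAlgebra

lemma homogeneousComponent_mul_of_isHomogeneous (hf : f.IsHomogeneous m)
    (g : MvPolynomial σ R) (n : ℕ) :
    homogeneousComponent n (g * f) =
      if m ≤ n then homogeneousComponent (n - m) g * f else 0 := by
  have coe_decompose (p : MvPolynomial σ R) (k : ℕ) :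
      (DirectSum.decompose (homogeneousSubmodule σ R) p k : MvPolynomial σ R) =
        homogeneousComponent k p := decomposition.decompose'_apply p k
  simpa only [coe_decompose] using
    DirectSum.coe_decompose_mul_of_right_mem (homogeneousSubmodule σ R) (a := g) n hf

lemma isHomogeneous_of_mul_right [IsDomain R] (hf : f.IsHomogeneous m) (hf0 : f ≠ 0)
    (h : (g * f).IsHomogeneous (n + m)) : g.IsHomogeneous n := by
  have hgf : homogeneousComponent n g * f = g * f := by
    simpa [homogeneousComponent_eq_self h] using
      (homogeneousComponent_mul_of_isHomogeneous hf g (n + m)).symm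
  exact mul_right_cancel₀ hf0 hgf ▸ homogeneousComponent_isHomogeneous n g

lemma exists_isHomogeneous_mul_of_mem_span {ι : Type*} [Fintype ι] {g : ι → MvPolynomial σ R}
    {e : ι → ℕ} (hg : ∀ i, (g i).IsHomogeneous (e i)) (hf : f.IsHomogeneous n)
    (hfg : f ∈ Ideal.span (Set.range g)) :
    ∃ q : ι → MvPolynomial σ R, (∀ i, (q i * g i).IsHomogeneous n) ∧ ∑ i, q i * g i = f := by
  obtain ⟨c, rfl⟩ := Ideal.mem_span_range_iff_exists_fun.1 hfg
  have hq (i : ι) : ∃ q, q * g i = homogeneousComponent n (c i * g i) := by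
    rw [homogeneousComponent_mul_of_isHomogeneous (hg i)]
    split_ifs
    exacts [⟨_, rfl⟩, ⟨0, zero_mul _⟩]
  choose q hq using hq
  refine ⟨q, fun i ↦ hq i ▸ homogeneousComponent_isHomogeneous n _, ?_⟩
  rw [← homogeneousComponent_eq_self hf, map_sum]
  exact Finset.sum_congr rfl fun i _ ↦ hq i

end HomogeneousMultiples

section Criteria

variable {r : ℕ} {K : Type*} [Field K] {L : MvPolynomial (Fin r) K} {d : ℕ}

attribute [local instance] MvPolynomial.gradedAlgebra

lemma mulMapInj_of_dvd_syzygies {ι : Type*} [Fintype ι] {g : ι → MvPolynomial (Fin r) K}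
    {e : ι → ℕ} (hg : ∀ i, (g i).IsHomogeneous (e i)) (hL : L.IsHomogeneous 1) (hL0 : L ≠ 0)
    (hsyz : ∀ q : ι → MvPolynomial (Fin r) K, (∀ i, (q i * g i).IsHomogeneous (d + 1)) →
      L ∣ ∑ i, q i * g i → ∀ i, L ∣ q i) :
    mulMapInj r K (Ideal.span (Set.range g)) L d := by
  rintro _ ⟨p, hp, rfl⟩ hLp
  have hLp_mem : p * L ∈ Ideal.span (Set.range g) := by
    rw [← Ideal.Quotient.eq_zero_iff_mem, mul_comm, map_mul]
    exact hLp
  obtain ⟨q, hq, hsum⟩ :=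
    exists_isHomogeneous_mul_of_mem_span hg (IsHomogeneous.mul hp hL) hLp_mem
  choose s hs using hsyz q hq (hsum ▸ dvd_mul_left L p)
  have hp_eq : p = ∑ i, s i * g i := by
    refine mul_left_cancel₀ hL0 ?_
    simp only [mul_comm L p, ← hsum, hs, Finset.mul_sum, mul_assoc]
  exact Ideal.Quotient.eq_zero_iff_mem.2
    (hp_eq ▸ Ideal.mem_span_range_iff_exists_fun.2 ⟨s, rfl⟩)

lemma mulMapSurj_of_homogeneous_le_sup {I : Ideal (MvPolynomial (Fin r) K)}
    (hI : I.IsHomogeneous (homogeneousSubmodule (Fin r) K)) (hL : L.IsHomogeneous 1)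
    (h : ∀ p : MvPolynomial (Fin r) K, p.IsHomogeneous (d + 1) → p ∈ I ⊔ Ideal.span {L}) :
    mulMapSurj r K I L d := by
  rintro _ ⟨p, hp, rfl⟩
  obtain ⟨u, hu, v, hv, rfl⟩ := Submodule.mem_sup.1 (h p hp)
  obtain ⟨t, rfl⟩ := Ideal.mem_span_singleton'.1 hv
  refine ⟨_, mk_mem_component (homogeneousComponent_isHomogeneous d t), ?_⟩
  have hcomp : homogeneousComponent (d + 1) u + homogeneousComponent d t * L = u + t * L := by
    simpa [homogeneousComponent_mul_of_isHomogeneous hL] using homogeneousComponent_eq_self hp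
  change _ = Ideal.Quotient.mk I (u + t * L)
  rw [← hcomp, ← map_mul, eq_comm, Ideal.Quotient.eq, mul_comm L, add_sub_cancel_right]
  exact homogeneousComponent_mem_of_mem hI hu (d + 1)

end Criteria

section Frobenius

lemma pow_char_pow_mem_of_forall_X_pow_mem {σ R : Type*} [CommRing R] (p k : ℕ) [Fact p.Prime]
    [CharP R p] {I : Ideal (MvPolynomial σ R)} (hI : ∀ i, X i ^ p ^ k ∈ I)
    {L : MvPolynomial σ R} (hL : L.IsHomogeneous 1) : L ^ p ^ k ∈ I := by
  have hspan : L ∈ Submodule.span R (Set.range X) := by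
    rwa [← homogeneousSubmodule_one_eq_span_X]
  clear hL
  induction hspan using Submodule.span_induction with
  | mem _ hX => obtain ⟨i, rfl⟩ := hX; exact hI i
  | zero => rw [zero_pow (pow_ne_zero k (Fact.out : p.Prime).ne_zero)]; exact I.zero_mem
  | add f g _ _ hf hg => rw [add_pow_char_pow]; exact I.add_mem hf hg
  | smul c f _ hf => rw [smul_pow, smul_eq_C_mul]; exact I.mul_mem_left _ hf

end Frobenius

section Hyperplane

variable {R : Type*} [CommRing R] {n : ℕ}

/-- Restriction of polynomials to the graph hyperplane `x_n = ℓ(x_0, …, x_{n-1})`. -/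
noncomputable def restrictGraph (ℓ : MvPolynomial (Fin n) R) :
    MvPolynomial (Fin (n + 1)) R →ₐ[R] MvPolynomial (Fin n) R :=
  aeval (Fin.snoc X ℓ : Fin (n + 1) → MvPolynomial (Fin n) R)

@[simp]
lemma restrictGraph_X_castSucc (ℓ : MvPolynomial (Fin n) R) (i : Fin n) :
    restrictGraph ℓ (X i.castSucc) = X i := by
  simp [restrictGraph]

@[simp]
lemma restrictGraph_X_last (ℓ : MvPolynomial (Fin n) R) :
    restrictGraph ℓ (X (Fin.last n)) = ℓ := by
  simp [restrictGraph]

@[simp]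
lemma restrictGraph_rename_castSucc (ℓ f : MvPolynomial (Fin n) R) :
    restrictGraph ℓ (rename Fin.castSucc f) = f := by
  rw [restrictGraph, aeval_rename]
  simp [Function.comp_def]

lemma restrictGraph_surjective (ℓ : MvPolynomial (Fin n) R) :
    Function.Surjective (restrictGraph ℓ) :=
  fun f ↦ ⟨rename Fin.castSucc f, restrictGraph_rename_castSucc ℓ f⟩

lemma isHomogeneous_restrictGraph {ℓ : MvPolynomial (Fin n) R} (hℓ : ℓ.IsHomogeneous 1)
    {f : MvPolynomial (Fin (n + 1)) R} {d : ℕ} (hf : f.IsHomogeneous d) :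
    (restrictGraph ℓ f).IsHomogeneous d := by
  rw [← one_mul d]
  refine hf.aeval _ fun i ↦ ?_
  cases i using Fin.lastCases with
  | last => simpa using hℓ
  | cast i => simpa using isHomogeneous_X R i

/-- The equation `x_n - ℓ(x_0, …, x_{n-1})` of the graph of `ℓ`. -/
noncomputable def graphForm (ℓ : MvPolynomial (Fin n) R) : MvPolynomial (Fin (n + 1)) R :=
  X (Fin.last n) - rename Fin.castSucc ℓ

lemma isHomogeneous_graphForm {ℓ : MvPolynomial (Fin n) R} (hℓ : ℓ.IsHomogeneous 1) :
    (graphForm ℓ).IsHomogeneous 1 :=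
  (isHomogeneous_X R _).sub hℓ.rename_isHomogeneous

lemma graphForm_ne_zero [Nontrivial R] (ℓ : MvPolynomial (Fin n) R) : graphForm ℓ ≠ 0 := by
  intro h
  have hrestrict : restrictGraph (ℓ + 1) (graphForm ℓ) = 1 := by
    rw [graphForm, map_sub, restrictGraph_X_last, restrictGraph_rename_castSucc,
      add_sub_cancel_left]
  exact one_ne_zero (by rw [← hrestrict, h, map_zero])

lemma ker_restrictGraph (ℓ : MvPolynomial (Fin n) R) :
    RingHom.ker (restrictGraph ℓ) = Ideal.span {graphForm ℓ} := by
  refine le_antisymm (fun f hf ↦ ?_) ((Ideal.span_singleton_le_iff_mem _).2 ?_)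
  · set J := Ideal.span {graphForm ℓ}
    have hcomp : (Ideal.Quotient.mkₐ R J).comp ((rename Fin.castSucc).comp (restrictGraph ℓ)) =
        Ideal.Quotient.mkₐ R J := by
      ext i
      cases i using Fin.lastCases with
      | last =>
        simp only [AlgHom.comp_apply, restrictGraph_X_last, Ideal.Quotient.mkₐ_eq_mk, eq_comm]
        exact Ideal.Quotient.eq.2 (Ideal.mem_span_singleton_self _)
      | cast i => simp
    have hf0 := DFunLike.congr_fun hcomp f
    rw [AlgHom.comp_apply, AlgHom.comp_apply, (RingHom.mem_ker).1 hf, map_zero, map_zero] at hf0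
    exact Ideal.Quotient.eq_zero_iff_mem.1 hf0.symm
  · simp [RingHom.mem_ker, graphForm]

lemma graphForm_dvd_iff {ℓ : MvPolynomial (Fin n) R} {f : MvPolynomial (Fin (n + 1)) R} :
    graphForm ℓ ∣ f ↔ restrictGraph ℓ f = 0 := by
  rw [← Ideal.mem_span_singleton, ← ker_restrictGraph, RingHom.mem_ker]

end Hyperplane

section LinearSyzygies

variable {R : Type*} [CommRing R]

/-- The restrictions of the five quartics `w⁴, x⁴, y⁴, z⁴, wxy(w + z)` to the hyperplane
`z = w + x + y`. -/
noncomputable def planeQuartics (R : Type*) [CommRing R] : Fin 5 → MvPolynomial (Fin 3) R :=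
  ![X 0 ^ 4, X 1 ^ 4, X 2 ^ 4, (X 0 + X 1 + X 2) ^ 4,
    X 0 * X 1 * X 2 * (X 0 + (X 0 + X 1 + X 2))]

/- The coefficients of `X ^ 3` and `X ^ 2` give a system in `a 2`, `b 2` of determinant
`6 ^ 2 - 4 ^ 2 = 20`. -/
lemma univariate_quartics_linear_syzygy (h2 : IsUnit (2 : R)) (h5 : IsUnit (5 : R))
    {a b : Fin 3 → R}
    (h : (Polynomial.C (a 0) * Polynomial.X + Polynomial.C (b 0)) * Polynomial.X ^ 4 +
      (Polynomial.C (a 1) * Polynomial.X + Polynomial.C (b 1)) +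
      (Polynomial.C (a 2) * Polynomial.X + Polynomial.C (b 2)) * (Polynomial.X + 1) ^ 4 = 0) :
    a = 0 ∧ b = 0 := by
  have hmonomials : Polynomial.C (a 0 + a 2) * Polynomial.X ^ 5 +
      Polynomial.C (b 0 + 4 * a 2 + b 2) * Polynomial.X ^ 4 +
      Polynomial.C (6 * a 2 + 4 * b 2) * Polynomial.X ^ 3 +
      Polynomial.C (4 * a 2 + 6 * b 2) * Polynomial.X ^ 2 +
      Polynomial.C (a 1 + a 2 + 4 * b 2) * Polynomial.X +
      Polynomial.C (b 1 + b 2) = 0 := by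
    rw [← h]
    simp only [map_add, map_mul, map_ofNat]
    ring
  have hcoeff (k : ℕ) := congrArg (Polynomial.coeff · k) hmonomials
  simp only [Polynomial.coeff_add, Polynomial.coeff_C_mul, Polynomial.coeff_X_pow,
    Polynomial.coeff_X, Polynomial.coeff_C, Polynomial.coeff_zero] at hcoeff
  have h5' : a 0 + a 2 = 0 := by simpa using hcoeff 5
  have h4 : b 0 + 4 * a 2 + b 2 = 0 := by simpa using hcoeff 4
  have h3 : 6 * a 2 + 4 * b 2 = 0 := by simpa using hcoeff 3
  have h2' : 4 * a 2 + 6 * b 2 = 0 := by simpa using hcoeff 2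
  have h1 : a 1 + a 2 + 4 * b 2 = 0 := by simpa using hcoeff 1
  have h0 : b 1 + b 2 = 0 := by simpa using hcoeff 0
  have h20 : IsUnit (2 ^ 2 * 5 : R) := (h2.pow 2).mul h5
  have ha2 : a 2 = 0 := h20.mul_right_eq_zero.1 (by linear_combination 6 * h3 - 4 * h2')
  have hb2 : b 2 = 0 := h20.mul_right_eq_zero.1 (by linear_combination 6 * h2' - 4 * h3)
  simp only [ha2, hb2, mul_zero, add_zero] at h0 h1 h4 h5'
  constructor <;> ext i <;> fin_cases i <;> assumption

lemma exists_sum_smul_X_eq {σ : Type*} [Fintype σ] {f : MvPolynomial σ R}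
    (hf : f.IsHomogeneous 1) : ∃ c : σ → R, ∑ i, c i • X i = f := by
  rwa [← Submodule.mem_span_range_iff_exists_fun, ← homogeneousSubmodule_one_eq_span_X]

lemma planeQuartics_mixed_ne_zero [Nontrivial R] (h2 : IsUnit (2 : R)) :
    planeQuartics R 4 ≠ 0 := by
  intro h
  have heval : (1 + (1 + 1 + 1) : R) = 0 := by simpa [planeQuartics] using congrArg (eval 1) h
  exact (h2.pow 2).ne_zero (by linear_combination heval)

/- On each of the three coordinate lines `wxy(2w + x + y)` vanishes and the other four quartics
restrict to `u⁴`, `v⁴`, `0` and `(u + v)⁴`. -/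
lemma planeQuartics_linear_syzygy [IsDomain R] (h2 : IsUnit (2 : R)) (h5 : IsUnit (5 : R))
    {q : Fin 5 → MvPolynomial (Fin 3) R} (hq : ∀ i, (q i).IsHomogeneous 1)
    (h : ∑ i, q i * planeQuartics R i = 0) (i : Fin 5) : q i = 0 := by
  choose c hc using fun i ↦ exists_sum_smul_X_eq (hq i)
  have hline (v : Fin 3 → Polynomial R) :
      ∑ i, (∑ j, c i j • v j) * aeval v (planeQuartics R i) = 0 := by
    simpa [← hc] using congrArg (aeval v) h
  simp only [Fin.sum_univ_five, Fin.sum_univ_three, Polynomial.smul_eq_C_mul] at hline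
  have hwx := univariate_quartics_linear_syzygy h2 h5
    (a := ![c 0 0, c 1 0, c 3 0]) (b := ![c 0 1, c 1 1, c 3 1])
    (by simpa [planeQuartics] using hline ![Polynomial.X, 1, 0])
  have hwy := univariate_quartics_linear_syzygy h2 h5
    (a := ![c 0 0, c 2 0, c 3 0]) (b := ![c 0 2, c 2 2, c 3 2])
    (by simpa [planeQuartics] using hline ![Polynomial.X, 0, 1])
  have hxy := univariate_quartics_linear_syzygy h2 h5
    (a := ![c 1 1, c 2 1, c 3 1]) (b := ![c 1 2, c 2 2, c 3 2])
    (by simpa [planeQuartics] using hline ![0, Polynomial.X, 1])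
  simp only [funext_iff, Fin.forall_fin_succ, Fin.forall_fin_zero, Matrix.cons_val_zero,
    Matrix.cons_val_succ, Pi.zero_apply, and_true] at hwx hwy hxy
  obtain ⟨⟨h00, h10, h30⟩, h01, h11, h31⟩ := hwx
  obtain ⟨⟨-, h20, -⟩, h02, h22, h32⟩ := hwy
  obtain ⟨⟨-, h21, -⟩, h12, -, -⟩ := hxy
  have hq0 : q 0 = 0 := by simp [← hc 0, Fin.sum_univ_three, h00, h01, h02]
  have hq1 : q 1 = 0 := by simp [← hc 1, Fin.sum_univ_three, h10, h11, h12]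
  have hq2 : q 2 = 0 := by simp [← hc 2, Fin.sum_univ_three, h20, h21, h22]
  have hq3 : q 3 = 0 := by simp [← hc 3, Fin.sum_univ_three, h30, h31, h32]
  have hq4 : q 4 = 0 := by
    simpa [Fin.sum_univ_five, hq0, hq1, hq2, hq3, planeQuartics_mixed_ne_zero h2] using h
  fin_cases i <;> assumption

end LinearSyzygies

section Sextics

/-- The relations satisfied by the classes of `w, x, y` modulo the five plane quartics. -/
structure QuarticRelations {A : Type*} [CommRing A] (w x y : A) : Prop where
  w_pow : w ^ 4 = 0
  x_pow : x ^ 4 = 0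
  y_pow : y ^ 4 = 0
  sum_pow : (w + x + y) ^ 4 = 0
  mixed : w * x * y * (w + (w + x + y)) = 0

namespace QuarticRelations

variable {A : Type*} [CommRing A] {w x y : A}

lemma swap (h : QuarticRelations w x y) : QuarticRelations w y x where
  w_pow := h.w_pow
  x_pow := h.y_pow
  y_pow := h.x_pow
  sum_pow := by linear_combination h.sum_pow
  mixed := by linear_combination h.mixed

/- The relation `mixed` expresses every sextic monomial divisible by `wxy` through `w³x²y` and
`w²x²y²`; the multiples of `sum_pow` then give linear relations between these two and the monomials
`w³x³`, `w³y³`, `x³y³`. -/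
lemma w3xy2_eq (h : QuarticRelations w x y) : w ^ 3 * x * y ^ 2 = -(w ^ 3 * x ^ 2 * y) := by
  linear_combination w ^ 2 * h.mixed - 2 * x * y * h.w_pow

lemma w2x3y_eq (h : QuarticRelations w x y) :
    w ^ 2 * x ^ 3 * y = -2 * (w ^ 3 * x ^ 2 * y) - w ^ 2 * x ^ 2 * y ^ 2 := by
  linear_combination w * x * h.mixed

lemma w2xy3_eq (h : QuarticRelations w x y) :
    w ^ 2 * x * y ^ 3 = 2 * (w ^ 3 * x ^ 2 * y) - w ^ 2 * x ^ 2 * y ^ 2 := by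
  linear_combination h.swap.w2x3y_eq - 2 * h.w3xy2_eq

lemma wx3y2_eq (h : QuarticRelations w x y) :
    w * x ^ 3 * y ^ 2 = 4 * (w ^ 3 * x ^ 2 * y) + 2 * (w ^ 2 * x ^ 2 * y ^ 2) := by
  linear_combination x ^ 2 * h.mixed - 2 * h.w2x3y_eq - w * y * h.x_pow

lemma wx2y3_eq (h : QuarticRelations w x y) :
    w * x ^ 2 * y ^ 3 = -4 * (w ^ 3 * x ^ 2 * y) + 2 * (w ^ 2 * x ^ 2 * y ^ 2) := by
  linear_combination h.swap.wx3y2_eq + 4 * h.w3xy2_eq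

lemma w2_mul_sum_pow (h : QuarticRelations w x y) :
    4 * (w ^ 3 * x ^ 3 + w ^ 3 * y ^ 3) = 2 * (w ^ 2 * x ^ 2 * y ^ 2) := by
  linear_combination w ^ 2 * h.sum_pow
    - (w ^ 2 + 4 * w * (x + y) + 6 * (x + y) ^ 2) * h.w_pow - w ^ 2 * h.x_pow - w ^ 2 * h.y_pow
    - 4 * h.w2x3y_eq - 4 * h.w2xy3_eq - 12 * h.w3xy2_eq

lemma x2_mul_sum_pow (h : QuarticRelations w x y) :
    4 * (w ^ 3 * x ^ 3) + 4 * (x ^ 3 * y ^ 3) + 12 * (w ^ 3 * x ^ 2 * y)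
      + 26 * (w ^ 2 * x ^ 2 * y ^ 2) = 0 := by
  linear_combination x ^ 2 * h.sum_pow
    - (x ^ 2 + 4 * x * (w + y) + 6 * (w + y) ^ 2) * h.x_pow - x ^ 2 * h.w_pow - x ^ 2 * h.y_pow
    - 4 * h.wx2y3_eq - 12 * h.w2x3y_eq - 12 * h.wx3y2_eq

lemma wx_mul_sum_pow (h : QuarticRelations w x y) :
    6 * (w ^ 3 * x ^ 3) - 2 * (w ^ 3 * x ^ 2 * y) + 16 * (w ^ 2 * x ^ 2 * y ^ 2) = 0 := by
  linear_combination w * x * h.sum_pow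
    - (w * x + 4 * x * (x + y)) * h.w_pow - (w * x + 4 * w * (w + y)) * h.x_pow - w * x * h.y_pow
    - 6 * h.w3xy2_eq - 6 * h.wx3y2_eq - 12 * h.w2x3y_eq - 4 * h.w2xy3_eq - 4 * h.wx2y3_eq

lemma w2x2y2_eq_zero (h : QuarticRelations w x y) (h2 : IsUnit (2 : A)) :
    w ^ 2 * x ^ 2 * y ^ 2 = 0 := by
  have hsix : 6 * (w ^ 2 * x ^ 2 * y ^ 2) = 0 := by
    linear_combination x * y * h.mixed - h.wx3y2_eq - h.wx2y3_eq
  refine (h2.pow 2).mul_right_eq_zero.1 ?_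
  linear_combination 24 * hsix - 4 * h.wx_mul_sum_pow - 4 * h.swap.wx_mul_sum_pow
    + 6 * h.w2_mul_sum_pow - 8 * h.w3xy2_eq

lemma w3x3_add_w3y3 (h : QuarticRelations w x y) (h2 : IsUnit (2 : A)) :
    w ^ 3 * x ^ 3 + w ^ 3 * y ^ 3 = 0 := by
  refine (h2.pow 2).mul_right_eq_zero.1 ?_
  linear_combination h.w2_mul_sum_pow + 2 * h.w2x2y2_eq_zero h2

lemma w3x2y_eq (h : QuarticRelations w x y) (h2 : IsUnit (2 : A)) :
    w ^ 3 * x ^ 2 * y = 3 * (w ^ 3 * x ^ 3) := by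
  refine sub_eq_zero.1 (h2.mul_right_eq_zero.1 ?_)
  linear_combination -h.wx_mul_sum_pow + 16 * h.w2x2y2_eq_zero h2

lemma x3y3_eq_zero (h : QuarticRelations w x y) (h2 : IsUnit (2 : A)) : x ^ 3 * y ^ 3 = 0 := by
  refine (h2.pow 3).mul_right_eq_zero.1 ?_
  linear_combination h.x2_mul_sum_pow + h.swap.x2_mul_sum_pow - 12 * h.w3xy2_eq
    - 4 * h.w3x3_add_w3y3 h2 - 52 * h.w2x2y2_eq_zero h2

lemma w3x3_eq_zero (h : QuarticRelations w x y) (h2 : IsUnit (2 : A)) (h5 : IsUnit (5 : A)) :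
    w ^ 3 * x ^ 3 = 0 := by
  refine ((h2.pow 3).mul h5).mul_right_eq_zero.1 ?_
  linear_combination h.x2_mul_sum_pow - 12 * h.w3x2y_eq h2 - 26 * h.w2x2y2_eq_zero h2
    - 4 * h.x3y3_eq_zero h2

lemma w3x2y_eq_zero (h : QuarticRelations w x y) (h2 : IsUnit (2 : A)) (h5 : IsUnit (5 : A)) :
    w ^ 3 * x ^ 2 * y = 0 := by
  rw [h.w3x2y_eq h2, h.w3x3_eq_zero h2 h5, mul_zero]

lemma sextic_monomial_eq_zero (h : QuarticRelations w x y) (h2 : IsUnit (2 : A))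
    (h5 : IsUnit (5 : A)) {i j k : ℕ} (hijk : i + j + k = 6) : w ^ i * x ^ j * y ^ k = 0 := by
  rcases le_or_gt 4 i with hi | hi
  · simp [pow_eq_zero_of_le hi h.w_pow]
  rcases le_or_gt 4 j with hj | hj
  · simp [pow_eq_zero_of_le hj h.x_pow]
  rcases le_or_gt 4 k with hk | hk
  · simp [pow_eq_zero_of_le hk h.y_pow]
  have hw3x2y := h.w3x2y_eq_zero h2 h5
  have hw2x2y2 := h.w2x2y2_eq_zero h2
  interval_cases i <;> interval_cases j <;> interval_cases k <;>
    try exact absurd hijk (by decide)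
  · simpa using h.x3y3_eq_zero h2
  · simp [h.wx2y3_eq, hw3x2y, hw2x2y2]
  · simp [h.wx3y2_eq, hw3x2y, hw2x2y2]
  · simp [h.w2xy3_eq, hw3x2y, hw2x2y2]
  · exact hw2x2y2
  · simp [h.w2x3y_eq, hw3x2y, hw2x2y2]
  · simpa using h.swap.w3x3_eq_zero h2 h5
  · simp [h.w3xy2_eq, hw3x2y]
  · simpa using hw3x2y
  · simpa using h.w3x3_eq_zero h2 h5

end QuarticRelations

lemma quarticRelations_of_map_planeQuartics {R A : Type*} [CommRing R] [CommRing A]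
    (φ : MvPolynomial (Fin 3) R →+* A) (hφ : ∀ i, φ (planeQuartics R i) = 0) :
    QuarticRelations (φ (X 0)) (φ (X 1)) (φ (X 2)) where
  w_pow := by simpa [planeQuartics] using hφ 0
  x_pow := by simpa [planeQuartics] using hφ 1
  y_pow := by simpa [planeQuartics] using hφ 2
  sum_pow := by simpa [planeQuartics] using hφ 3
  mixed := by simpa [planeQuartics] using hφ 4

lemma sextic_mem_span_planeQuartics {R : Type*} [CommRing R] (h2 : IsUnit (2 : R))
    (h5 : IsUnit (5 : R)) {f : MvPolynomial (Fin 3) R} (hf : f.IsHomogeneous 6) :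
    f ∈ Ideal.span (Set.range (planeQuartics R)) := by
  set J := Ideal.span (Set.range (planeQuartics R))
  have hrel := quarticRelations_of_map_planeQuartics (Ideal.Quotient.mk J) fun i ↦
    Ideal.Quotient.eq_zero_iff_mem.2 (Ideal.subset_span (Set.mem_range_self i))
  have h2J : IsUnit (2 : MvPolynomial (Fin 3) R ⧸ J) := by
    have := (h2.map C).map (Ideal.Quotient.mk J)
    rwa [map_ofNat, map_ofNat] at this
  have h5J : IsUnit (5 : MvPolynomial (Fin 3) R ⧸ J) := by
    have := (h5.map C).map (Ideal.Quotient.mk J)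
    rwa [map_ofNat, map_ofNat] at this
  rw [f.as_sum]
  refine J.sum_mem fun s hs ↦ ?_
  have hdeg : s 0 + s 1 + s 2 = 6 := by
    rw [← Fin.sum_univ_three, ← Finsupp.degree_eq_sum, hf.degree_eq_sum_deg_support hs]
    rfl
  have hmonomial := hrel.sextic_monomial_eq_zero h2J h5J hdeg
  rw [monomial_eq, Finsupp.prod_fintype _ _ fun _ ↦ pow_zero _, Fin.prod_univ_three]
  refine J.mul_mem_left _ (Ideal.Quotient.eq_zero_iff_mem.1 ?_)
  simpa only [map_mul, map_pow] using hmonomial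

end Sextics

section MonomialIdeals

lemma monomial_notMem_span_range_X_pow {σ R : Type*} [CommSemiring R] [Nontrivial R]
    {s : σ →₀ ℕ} {e : σ → ℕ} (h : ∀ i, s i < e i) :
    monomial s (1 : R) ∉ Ideal.span (Set.range fun i ↦ X i ^ e i) := by
  classical
  have hrange : (Set.range fun i ↦ (X i : MvPolynomial σ R) ^ e i) =
      (fun s ↦ monomial s 1) '' Set.range fun i ↦ Finsupp.single i (e i) := by
    simp only [← Set.range_comp, Function.comp_def, X_pow_eq_monomial]
  rw [hrange, mem_ideal_span_monomial_image]
  intro hs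
  obtain ⟨_, ⟨i, rfl⟩, hle⟩ := hs s (by simp [support_monomial])
  exact (h i).not_ge (by simpa using hle i)

end MonomialIdeals

section SpaceQuartics

variable {K : Type*} [Field K]

/-- The generators `w⁴, x⁴, y⁴, z⁴, wxy(w + z)`. -/
noncomputable def spaceQuartics (K : Type*) [Field K] : Fin 5 → MvPolynomial (Fin 4) K :=
  ![X 0 ^ 4, X 1 ^ 4, X 2 ^ 4, X 3 ^ 4, X 0 * X 1 * X 2 * (X 0 + X 3)]

lemma range_spaceQuartics :
    Set.range (spaceQuartics K) =
      {X 0 ^ 4, X 1 ^ 4, X 2 ^ 4, X 3 ^ 4, X 0 * X 1 * X 2 * (X 0 + X 3)} := by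
  simp [spaceQuartics, Matrix.range_cons, Set.insert_def, Set.union_def]

lemma isHomogeneous_spaceQuartics (i : Fin 5) : (spaceQuartics K i).IsHomogeneous 4 := by
  have hX (j : Fin 4) : (X j : MvPolynomial (Fin 4) K).IsHomogeneous 1 := isHomogeneous_X K j
  fin_cases i
  · exact (hX 0).pow 4
  · exact (hX 1).pow 4
  · exact (hX 2).pow 4
  · exact (hX 3).pow 4
  · exact (((hX 0).mul (hX 1)).mul (hX 2)).mul ((hX 0).add (hX 3))

lemma spaceQuartics_ne_zero (i : Fin 5) : spaceQuartics K i ≠ 0 := by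
  intro h
  have heval := congrArg (eval ![1, 1, 1, 0]) h
  fin_cases i <;> simp [spaceQuartics] at h heval

lemma restrictGraph_spaceQuartics (i : Fin 5) :
    restrictGraph (X 0 + X 1 + X 2) (spaceQuartics K i) = planeQuartics K i := by
  have hX (j : Fin 3) := restrictGraph_X_castSucc (X 0 + X 1 + X 2 : MvPolynomial (Fin 3) K) j
  have hX3 := restrictGraph_X_last (X 0 + X 1 + X 2 : MvPolynomial (Fin 3) K)
  have hX0 := hX 0
  have hX1 := hX 1
  have hX2 := hX 2
  simp only [Fin.reduceLast, Fin.reduceCastSucc] at hX0 hX1 hX2 hX3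
  fin_cases i <;> simp [spaceQuartics, planeQuartics, hX0, hX1, hX2, hX3]

lemma isHomogeneous_X_add_X_add_X :
    (X 0 + X 1 + X 2 : MvPolynomial (Fin 3) K).IsHomogeneous 1 :=
  ((isHomogeneous_X K 0).add (isHomogeneous_X K 1)).add (isHomogeneous_X K 2)

lemma mulMapInj_spaceQuartics (h2 : IsUnit (2 : K)) (h5 : IsUnit (5 : K)) {d : ℕ} (hd : d ≤ 4) :
    mulMapInj 4 K (Ideal.span (Set.range (spaceQuartics K))) (graphForm (X 0 + X 1 + X 2)) d := by
  refine mulMapInj_of_dvd_syzygies isHomogeneous_spaceQuartics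
    (isHomogeneous_graphForm isHomogeneous_X_add_X_add_X) (graphForm_ne_zero _) fun q hq hdvd i ↦ ?_
  have hlinear (i : Fin 5) : (X 0 ^ (4 - d) * q i).IsHomogeneous 1 := by
    refine isHomogeneous_of_mul_right (isHomogeneous_spaceQuartics i) (spaceQuartics_ne_zero i) ?_
    have hmul := (isHomogeneous_X_pow (R := K) (0 : Fin 4) (4 - d)).mul (hq i)
    rwa [← mul_assoc, show 4 - d + (d + 1) = 1 + 4 by omega] at hmul
  have hsyz :
      ∑ i, restrictGraph (X 0 + X 1 + X 2) (X 0 ^ (4 - d) * q i) * planeQuartics K i = 0 := by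
    simp only [← restrictGraph_spaceQuartics, ← map_mul, ← map_sum, mul_assoc, ← Finset.mul_sum]
    exact graphForm_dvd_iff.1 (hdvd.mul_left _)
  have hqi := planeQuartics_linear_syzygy h2 h5
    (fun i ↦ isHomogeneous_restrictGraph isHomogeneous_X_add_X_add_X (hlinear i)) hsyz i
  have hX0 : restrictGraph (X 0 + X 1 + X 2) (X 0) = (X 0 : MvPolynomial (Fin 3) K) :=
    restrictGraph_X_castSucc _ 0
  rw [map_mul, map_pow, hX0] at hqi
  exact graphForm_dvd_iff.2 ((mul_eq_zero.1 hqi).resolve_left (pow_ne_zero _ (X_ne_zero 0)))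

attribute [local instance] MvPolynomial.gradedAlgebra in
lemma mulMapSurj_spaceQuartics (h2 : IsUnit (2 : K)) (h5 : IsUnit (5 : K)) {d : ℕ} (hd : 5 ≤ d) :
    mulMapSurj 4 K (Ideal.span (Set.range (spaceQuartics K))) (graphForm (X 0 + X 1 + X 2)) d := by
  have hideal : (Ideal.span (Set.range (spaceQuartics K))).IsHomogeneous
      (homogeneousSubmodule (Fin 4) K) :=
    Ideal.homogeneous_span _ _ (by rintro _ ⟨i, rfl⟩; exact ⟨4, isHomogeneous_spaceQuartics i⟩)
  refine mulMapSurj.mono (mulMapSurj_of_homogeneous_le_sup hideal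
    (isHomogeneous_graphForm isHomogeneous_X_add_X_add_X) fun p hp ↦ ?_) hd
  rw [← ker_restrictGraph, ← Ideal.comap_map_of_surjective' _ (restrictGraph_surjective _),
    Ideal.mem_comap, Ideal.map_span, ← Set.range_comp]
  simp only [Function.comp_def, restrictGraph_spaceQuartics]
  exact sextic_mem_span_planeQuartics h2 h5
    (isHomogeneous_restrictGraph isHomogeneous_X_add_X_add_X hp)

theorem isLefschetzElem_graphForm_spaceQuartics (h2 : IsUnit (2 : K)) (h5 : IsUnit (5 : K)) :
    isLefschetzElem 4 K (Ideal.span (Set.range (spaceQuartics K)))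
      (graphForm (X 0 + X 1 + X 2)) := by
  refine ⟨isHomogeneous_graphForm isHomogeneous_X_add_X_add_X, fun d ↦ ?_⟩
  rcases Nat.lt_or_ge d 5 with hd | hd
  · exact .inl (mulMapInj_spaceQuartics h2 h5 (Nat.le_of_lt_succ hd))
  · exact .inr (mulMapSurj_spaceQuartics h2 h5 hd)

lemma x3y3z3_notMem_span_spaceQuartics :
    (X 1 ^ 3 * X 2 ^ 3 * X 3 ^ 3 : MvPolynomial (Fin 4) K) ∉
      Ideal.span (Set.range (spaceQuartics K)) := by
  set J : Ideal (MvPolynomial (Fin 4) K) := Ideal.span (Set.range fun i ↦ X i ^ ![1, 4, 4, 4] i)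
  have hJ (i : Fin 4) : X i ^ ![1, 4, 4, 4] i ∈ J := Ideal.subset_span (Set.mem_range_self i)
  have hX0 : (X 0 : MvPolynomial (Fin 4) K) ∈ J := by simpa using hJ 0
  have hle : Ideal.span (Set.range (spaceQuartics K)) ≤ J := by
    rw [Ideal.span_le, Set.range_subset_iff]
    intro i
    fin_cases i
    · exact J.pow_mem_of_mem hX0 4 (by decide)
    · exact hJ 1
    · exact hJ 2
    · exact hJ 3
    · exact J.mul_mem_right _ (J.mul_mem_right _ (J.mul_mem_right _ hX0))
  have hmonomial : (X 1 ^ 3 * X 2 ^ 3 * X 3 ^ 3 : MvPolynomial (Fin 4) K) =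
      monomial (Finsupp.equivFunOnFinite.symm ![0, 3, 3, 3]) 1 := by
    simp [monomial_eq, Finsupp.prod_fintype, Fin.prod_univ_four]
  intro hmem
  exact monomial_notMem_span_range_X_pow (R := K) (by decide) (hmonomial ▸ hle hmem)

theorem not_hasWLP_spaceQuartics (p k : ℕ) [Fact p.Prime] [CharP K p] (h4 : 4 ≤ p ^ k)
    (h5 : p ^ k ≤ 5) : ¬ hasWLP 4 K (Ideal.span (Set.range (spaceQuartics K))) := by
  rintro ⟨L, hL⟩
  have hX (i : Fin 4) : X i ^ p ^ k ∈ Ideal.span (Set.range (spaceQuartics K)) := by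
    refine Ideal.pow_mem_of_pow_mem _ (Ideal.subset_span ⟨i.castSucc, ?_⟩) h4
    fin_cases i <;> rfl
  have hbot : component 4 K (Ideal.span (Set.range (spaceQuartics K))) 9 = ⊥ :=
    hL.component_eq_bot (pow_char_pow_mem_of_forall_X_pow_mem p k hX hL.1) (by omega)
  have hmem := mk_mem_component (I := Ideal.span (Set.range (spaceQuartics K)))
    (((isHomogeneous_X_pow (R := K) (1 : Fin 4) 3).mul (isHomogeneous_X_pow 2 3)).mul
      (isHomogeneous_X_pow 3 3))
  rw [hbot, Submodule.mem_bot, Ideal.Quotient.eq_zero_iff_mem] at hmem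
  exact x3y3z3_notMem_span_spaceQuartics hmem

end SpaceQuartics

/-- `K[w,x,y,z]/(w⁴, x⁴, y⁴, z⁴, wxy(w+z))` has the WLP iff `char K ∉ {2, 5}`. -/
theorem stmt_12 {K : Type*} [Field K] :
    hasWLP 4 K (Ideal.span {(X 0 : MvPolynomial (Fin 4) K) ^ 4, X 1 ^ 4, X 2 ^ 4, X 3 ^ 4,
      X 0 * X 1 * X 2 * (X 0 + X 3)}) ↔ (ringChar K ≠ 2 ∧ ringChar K ≠ 5) := by
  rw [← range_spaceQuartics]
  constructor
  · refine fun h ↦ ⟨fun hchar ↦ ?_, fun hchar ↦ ?_⟩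
    · have : CharP K 2 := ringChar.of_eq hchar
      have : Fact (Nat.Prime 2) := ⟨Nat.prime_two⟩
      exact not_hasWLP_spaceQuartics 2 2 (by norm_num) (by norm_num) h
    · have : CharP K 5 := ringChar.of_eq hchar
      have : Fact (Nat.Prime 5) := ⟨Nat.prime_five⟩
      exact not_hasWLP_spaceQuartics 5 1 (by norm_num) (by norm_num) h
  · rintro ⟨h2, h5⟩
    have : CharP K (ringChar K) := ringChar.charP K
    have hunit {p : ℕ} (hp : p.Prime) (hne : ringChar K ≠ p) : IsUnit (p : K) :=
      (CharP.cast_ne_zero_of_ne_of_prime K hp hne).isUnit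
    exact ⟨_, isLefschetzElem_graphForm_spaceQuartics (mod_cast hunit Nat.prime_two h2)
      (mod_cast hunit Nat.prime_five h5)⟩
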